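/- Let m ≥ 3 and let F₁, F₂, F₃, … be the Fibonacci sequence with F₁ = F₂ = 1, F₃ = 2, F₄ = 3, F₅ = 5, etc. If n ≥ 5 and F₁ + F₂ + ⋯ + Fₙ ≥ m - 4, then the m-gonal form F₁P_m(x₁) + F₂P_m(x₂) + ⋯ + FₙP_m(xₙ) is universal. -/

import Mathlib

/-- The generalized `m`-gonal number `P_m(x) = ((m-2)x² - (m-4)x)/2`. -/
def polygonal (m x : ℤ) : ℤ := ((m - 2) * x ^ 2 - (m - 4) * x) / 2

/-!
Put `a = ∑ wₖ xₖ²` and `b = ∑ wₖ xₖ`. Then `2 ∑ wₖ P_m(xₖ) = (m - 2)(a - b) + 2b`, so dividing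
`N + 1` by `m - 2` reduces universality to attaining every admissible pair of moments `(a, b)` with
`-1 ≤ b ≤ ∑ wₖ`. This property survives appending a weight that exceeds the sum of the previous
weights by at most one, since the new variable can be taken to be `0` or `1`; the Fibonacci numbers
grow slowly enough. For the weights `1, 1, 2, 3, 5`, fixing `b` and one further linear form in the
`xₖ` leaves a ternary form which is rationally equivalent to a sum of three squares. The value of
that linear form is chosen so that the integer to be represented, possibly after removing a factor
`4`, is neither divisible by `4` nor congruent to `7` modulo `8`; the finitely many pairs for which
that integer would not be positive are given by explicit vectors.

Such an integer `n` is a sum of three squares: Dirichlet's theorem and quadratic reciprocity put it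
on the diagonal of a positive definite integral `3 × 3` matrix of determinant one, and Hermite's
bound on the minimum of a form shows that such a matrix is `UᵀU`.
-/

section Bordered

open Matrix

/-- The block matrix with corner `a`, first row `a, r` and first column `a, c`. Unlike
`Matrix.fromBlocks` it is indexed by `Fin (n + 1)`, which suits inductions on the size. -/
def bordered {n : ℕ} {α : Type*} (a : α) (r c : Fin n → α) (D : Matrix (Fin n) (Fin n) α) :
    Matrix (Fin (n + 1)) (Fin (n + 1)) α :=
  of (vecCons (vecCons a r) fun i => vecCons (c i) (D i))

theorem eq_bordered {n : ℕ} {α : Type*} (M : Matrix (Fin (n + 1)) (Fin (n + 1)) α) :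
    M = bordered (M 0 0) (fun j => M 0 j.succ) (fun i => M i.succ 0) (M.submatrix .succ .succ) := by
  ext i j
  cases i using Fin.cases <;> cases j using Fin.cases <;> rfl

theorem transpose_bordered {n : ℕ} {α : Type*} (a : α) (r c : Fin n → α)
    (D : Matrix (Fin n) (Fin n) α) : (bordered a r c D)ᵀ = bordered a c r Dᵀ := by
  ext i j
  cases i using Fin.cases <;> cases j using Fin.cases <;> rfl

theorem exists_eq_bordered_of_isSymm {n : ℕ} {α : Type*}
    {M : Matrix (Fin (n + 1)) (Fin (n + 1)) α} (hM : M.IsSymm) :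
    ∃ v D, M = bordered (M 0 0) v v D :=
  ⟨fun j => M 0 j.succ, _, by
    conv_lhs => rw [eq_bordered M]
    congr 1
    ext i
    exact hM.apply 0 i.succ⟩

variable {n : ℕ} {R : Type*} [CommRing R]

theorem bordered_mul_bordered (a a' : R) (r c r' c' : Fin n → R) (D D' : Matrix (Fin n) (Fin n) R) :
    bordered a r c D * bordered a' r' c' D' =
      bordered (a * a' + r ⬝ᵥ c') (a • r' + r ᵥ* D') (a' • c + D *ᵥ c')
        (vecMulVec c r' + D * D') := by
  ext i j
  cases i using Fin.cases <;> cases j using Fin.cases <;>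
    simp [bordered, mul_apply, Fin.sum_univ_succ, dotProduct, mulVec, vecMul, vecMulVec, mul_comm]

theorem bordered_mulVec_vecCons (a t : R) (r c y : Fin n → R) (D : Matrix (Fin n) (Fin n) R) :
    bordered a r c D *ᵥ vecCons t y = vecCons (a * t + r ⬝ᵥ y) (t • c + D *ᵥ y) := by
  ext i
  cases i using Fin.cases <;>
    simp [bordered, mulVec, dotProduct, Fin.sum_univ_succ, mul_comm]

theorem det_bordered_zero (a : R) (r : Fin n → R) (D : Matrix (Fin n) (Fin n) R) :
    (bordered a r 0 D).det = a * D.det := by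
  have corner : bordered a r 0 D 0 0 = a := rfl
  have column (i : Fin n) : bordered a r 0 D i.succ 0 = 0 := rfl
  have minor : (bordered a r 0 D).submatrix Fin.succ Fin.succ = D := rfl
  rw [det_succ_column_zero, Fin.sum_univ_succ]
  simp [corner, column, minor]

theorem isUnit_bordered_zero {r : Fin n → R} {V : Matrix (Fin n) (Fin n) R} (hV : IsUnit V) :
    IsUnit (bordered 1 r 0 V) := by
  rw [isUnit_iff_isUnit_det] at hV ⊢
  rwa [det_bordered_zero, one_mul]

/-- The Schur complement of the corner of the symmetric matrix `bordered a v v D`, multiplied by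
the corner so that no division occurs. -/
def schur (a : R) (v : Fin n → R) (D : Matrix (Fin n) (Fin n) R) : Matrix (Fin n) (Fin n) R :=
  a • D - vecMulVec v v

theorem mul_det_schur (a : R) (v : Fin n → R) (D : Matrix (Fin n) (Fin n) R) :
    a * (schur a v D).det = a ^ n * (bordered a v v D).det := by
  have eliminate : bordered 1 0 (-v) (a • 1) * bordered a v v D = bordered a v 0 (schur a v D) := by
    rw [bordered_mul_bordered]
    congr 1
    · simp
    · simp
    · simp [smul_mulVec]
    · simp [schur, neg_vecMulVec, sub_eq_neg_add]
  have det_left : (bordered 1 0 (-v) (a • (1 : Matrix (Fin n) (Fin n) R))).det = a ^ n := by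
    rw [← det_transpose, transpose_bordered, det_bordered_zero]
    simp
  rw [← det_bordered_zero a v, ← eliminate, det_mul, det_left]

theorem mul_bordered_quadratic (a t : R) (v y : Fin n → R) (D : Matrix (Fin n) (Fin n) R) :
    a * (vecCons t y ⬝ᵥ bordered a v v D *ᵥ vecCons t y) =
      (a * t + v ⬝ᵥ y) ^ 2 + y ⬝ᵥ schur a v D *ᵥ y := by
  rw [bordered_mulVec_vecCons, cons_dotProduct_cons, schur, sub_mulVec, smul_mulVec,
    vecMulVec_mulVec]
  simp only [dotProduct_add, dotProduct_sub, dotProduct_smul, dotProduct_comm y v, smul_eq_mul,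
    op_smul_eq_mul]
  ring

end Bordered

section HermiteReduction

open Matrix

variable {n : ℕ}

theorem exists_four_mul_sq_le_sq {a : ℤ} (ha : 0 < a) (b : ℤ) :
    ∃ h : ℤ, 4 * (a * h + b) ^ 2 ≤ a ^ 2 := by
  obtain ⟨m, rfl⟩ : ∃ m : ℕ, a = m := ⟨a.toNat, by omega⟩
  have hm : 0 < m := by omega
  refine ⟨-(b.bdiv m), ?_⟩
  have remainder : m * -(b.bdiv m) + b = b.bmod m := by
    linarith [Int.bdiv_add_bmod b m]
  have lower := Int.le_bmod (x := b) hm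
  have upper := Int.bmod_le (x := b) hm
  rw [remainder]
  have : |2 * b.bmod m| ≤ |(m : ℤ)| := by
    rw [Nat.abs_cast, abs_le]
    omega
  linarith [sq_le_sq.mpr this]

theorem transpose_mul_mul_apply_self {ι R : Type*} [Fintype ι] [NonUnitalSemiring R]
    (U M : Matrix ι ι R) (i : ι) : (Uᵀ * M * U) i i = U.col i ⬝ᵥ M *ᵥ U.col i := by
  rw [Matrix.mul_assoc, mul_apply']
  rfl

theorem posDef_transpose_mul_mul {ι R : Type*} [Fintype ι] [DecidableEq ι] [CommRing R]
    [PartialOrder R] [StarRing R] [TrivialStar R] {M U : Matrix ι ι R} (hM : M.PosDef)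
    (hU : IsUnit U) : (Uᵀ * M * U).PosDef := by
  simpa [conjTranspose_eq_transpose_of_trivial] using
    hM.conjTranspose_mul_mul_same (mulVec_injective_of_isUnit hU)

theorem det_transpose_mul_mul {ι : Type*} [Fintype ι] [DecidableEq ι] {M U : Matrix ι ι ℤ}
    (hU : IsUnit U) : (Uᵀ * M * U).det = M.det := by
  have : U.det * U.det = 1 := Int.isUnit_mul_self ((isUnit_iff_isUnit_det U).mp hU)
  rw [det_mul, det_mul, det_transpose, mul_right_comm, this, one_mul]

theorem posDef_schur {R : Type*} [CommRing R] [LinearOrder R] [IsStrictOrderedRing R] [StarRing R]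
    [TrivialStar R] {a : R} {v : Fin n → R} {D : Matrix (Fin n) (Fin n) R}
    (h : (bordered a v v D).PosDef) : (schur a v D).PosDef := by
  have ha : 0 < a := h.diag_pos (i := 0)
  have hD : Dᵀ = D := by
    ext i j
    exact (star_trivial _).symm.trans (h.isHermitian.apply i.succ j.succ)
  refine .of_dotProduct_mulVec_pos ?_ fun y hy => ?_
  · rw [IsHermitian, conjTranspose_eq_transpose_of_trivial, schur, transpose_sub, transpose_smul,
      transpose_vecMulVec, hD]
  · have hne : vecCons (-(v ⬝ᵥ y)) (a • y) ≠ 0 := fun h0 =>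
      hy ((smul_eq_zero.mp (funext fun i => congrFun h0 i.succ)).resolve_left ha.ne')
    have key := mul_bordered_quadratic a (-(v ⬝ᵥ y)) v (a • y) D
    have pos := mul_pos ha (h.dotProduct_mulVec_pos hne)
    rw [star_trivial, key] at pos
    simp only [dotProduct_smul, mulVec_smul, smul_dotProduct, smul_eq_mul] at pos
    rw [star_trivial]
    have : 0 < a ^ 2 * (y ⬝ᵥ schur a v D *ᵥ y) := by linarith
    exact pos_of_mul_pos_right this (sq_nonneg a)

theorem exists_isUnit_forall_apply_le {ι : Type*} [Fintype ι] [DecidableEq ι] {M : Matrix ι ι ℤ}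
    (hM : M.PosDef) (i : ι) :
    ∃ U : Matrix ι ι ℤ, IsUnit U ∧
      ∀ V : Matrix ι ι ℤ, IsUnit V → (Uᵀ * M * U) i i ≤ (Vᵀ * M * V) i i := by
  obtain ⟨U, hU, hmin⟩ := exists_minimalFor_of_wellFoundedLT (fun U : Matrix ι ι ℤ => IsUnit U)
    (fun U => ((Uᵀ * M * U) i i).toNat) ⟨1, isUnit_one⟩
  refine ⟨U, hU, fun V hV => ?_⟩
  have hpos := (posDef_transpose_mul_mul hM hV).diag_pos (i := i)
  have := hmin hV
  grind

theorem exists_isUnit_col_zero_eq_vecCons {V : Matrix (Fin (n + 1)) (Fin (n + 1)) ℤ}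
    (hV : IsUnit V) (h : ℤ) :
    ∃ U : Matrix (Fin (n + 2)) (Fin (n + 2)) ℤ, IsUnit U ∧ U.col 0 = vecCons h (V.col 0) := by
  refine ⟨(bordered 1 (fun _ => h) 0 V).submatrix (Equiv.refl _) (Equiv.swap 0 1),
    (isUnit_submatrix_equiv _ _).mpr (isUnit_bordered_zero hV), ?_⟩
  ext i
  cases i using Fin.cases <;> simp [bordered]

-- Completing the square at `(h, V.col 0)`, with `h` chosen to make the squared linear form at most
-- `a ^ 2 / 4`, bounds the rest of the value of the form below by `3 * a ^ 2 / 4`.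
theorem three_mul_sq_le_of_minimal {a : ℤ} {v : Fin (n + 1) → ℤ}
    {D V : Matrix (Fin (n + 1)) (Fin (n + 1)) ℤ} (ha : 0 < a)
    (hmin : ∀ U : Matrix (Fin (n + 2)) (Fin (n + 2)) ℤ, IsUnit U →
      a ≤ (Uᵀ * bordered a v v D * U) 0 0) (hV : IsUnit V) :
    3 * a ^ 2 ≤ 4 * (Vᵀ * schur a v D * V) 0 0 := by
  obtain ⟨h, hh⟩ := exists_four_mul_sq_le_sq ha (v ⬝ᵥ V.col 0)
  obtain ⟨U, hU, hcol⟩ := exists_isUnit_col_zero_eq_vecCons hV h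
  have hle := hmin U hU
  have key := mul_bordered_quadratic a h v (V.col 0) D
  rw [← hcol, ← transpose_mul_mul_apply_self, ← transpose_mul_mul_apply_self] at key
  nlinarith

theorem exists_corner_pow_le_det {M : Matrix (Fin (n + 1)) (Fin (n + 1)) ℤ} (hM : M.PosDef) :
    ∃ U : Matrix (Fin (n + 1)) (Fin (n + 1)) ℤ, IsUnit U ∧
      3 ^ (n + 1).choose 2 * (Uᵀ * M * U) 0 0 ^ (n + 1) ≤ 4 ^ (n + 1).choose 2 * M.det := by
  induction n with
  | zero => exact ⟨1, isUnit_one, by simp⟩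
  | succ n ih =>
    obtain ⟨U, hU, hmin⟩ := exists_isUnit_forall_apply_le hM 0
    refine ⟨U, hU, ?_⟩
    have hpos := posDef_transpose_mul_mul hM hU
    obtain ⟨v, D, hbord⟩ :=
      exists_eq_bordered_of_isSymm (isHermitian_iff_isSymm.mp hpos.isHermitian)
    rw [← det_transpose_mul_mul (M := M) hU]
    have minimal (W : Matrix (Fin (n + 2)) (Fin (n + 2)) ℤ) (hW : IsUnit W) :
        (Uᵀ * M * U) 0 0 ≤ (Wᵀ * (Uᵀ * M * U) * W) 0 0 := by
      simpa only [transpose_mul, Matrix.mul_assoc] using hmin (U * W) (hU.mul hW)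
    generalize Uᵀ * M * U = M' at *
    generalize M' 0 0 = a at *
    subst hbord
    have ha : 0 < a := hpos.diag_pos (i := 0)
    obtain ⟨V, hV, hermite⟩ := ih (posDef_schur hpos)
    have det_schur : (schur a v D).det = a ^ n * (bordered a v v D).det := by
      have := mul_det_schur a v D
      rw [pow_succ', mul_assoc] at this
      exact mul_left_cancel₀ ha.ne' this
    have gap := pow_le_pow_left₀ (by positivity) (three_mul_sq_le_of_minimal ha minimal hV) (n + 1)
    rw [det_schur] at hermite
    refine le_of_mul_le_mul_left ?_ (pow_pos ha n)
    have hchoose : (n + 1 + 1).choose 2 = (n + 1) + (n + 1).choose 2 := by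
      rw [Nat.choose_succ_succ' (n + 1) 1, Nat.choose_one_right]
    set g := (Vᵀ * schur a v D * V) 0 0
    calc a ^ n * (3 ^ (n + 1 + 1).choose 2 * a ^ (n + 1 + 1))
        = 3 ^ (n + 1).choose 2 * (3 * a ^ 2) ^ (n + 1) := by rw [hchoose]; ring
      _ ≤ 3 ^ (n + 1).choose 2 * (4 * g) ^ (n + 1) := by gcongr
      _ = 4 ^ (n + 1) * (3 ^ (n + 1).choose 2 * g ^ (n + 1)) := by ring
      _ ≤ 4 ^ (n + 1) * (4 ^ (n + 1).choose 2 * (a ^ n * (bordered a v v D).det)) := by gcongr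
      _ = a ^ n * (4 ^ (n + 1 + 1).choose 2 * (bordered a v v D).det) := by rw [hchoose]; ring

theorem exists_corner_eq_one {M : Matrix (Fin (n + 1)) (Fin (n + 1)) ℤ} (hn : n ≤ 4)
    (hM : M.PosDef) (hdet : M.det = 1) :
    ∃ U : Matrix (Fin (n + 1)) (Fin (n + 1)) ℤ, IsUnit U ∧ (Uᵀ * M * U) 0 0 = 1 := by
  obtain ⟨U, hU, hle⟩ := exists_corner_pow_le_det hM
  refine ⟨U, hU, ?_⟩
  have hpos := (posDef_transpose_mul_mul hM hU).diag_pos (i := 0)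
  generalize (Uᵀ * M * U) 0 0 = c at *
  by_contra hne
  have hc : 2 ^ (n + 1) ≤ c ^ (n + 1) := pow_le_pow_left₀ zero_le_two (by omega) _
  rw [hdet] at hle
  interval_cases n <;> norm_num [Nat.choose] at hle hc <;> omega

theorem exists_eq_transpose_mul_self {M : Matrix (Fin n) (Fin n) ℤ} (hn : n ≤ 5) (hM : M.PosDef)
    (hdet : M.det = 1) : ∃ U : Matrix (Fin n) (Fin n) ℤ, M = Uᵀ * U := by
  induction n with
  | zero => exact ⟨0, Subsingleton.elim _ _⟩
  | succ n ih =>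
    obtain ⟨U, hU, hcorner⟩ := exists_corner_eq_one (by omega) hM hdet
    have hpos := posDef_transpose_mul_mul hM hU
    obtain ⟨v, D, hbord⟩ :=
      exists_eq_bordered_of_isSymm (isHermitian_iff_isSymm.mp hpos.isHermitian)
    rw [hcorner] at hbord
    have det_schur : (schur 1 v D).det = 1 := by
      simpa [← hbord, det_transpose_mul_mul hU, hdet] using mul_det_schur 1 v D
    obtain ⟨W, hW⟩ := ih (by omega) (posDef_schur (hbord ▸ hpos)) det_schur
    have factor : bordered 1 v v D = (bordered 1 v 0 W)ᵀ * bordered 1 v 0 W := by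
      rw [transpose_bordered, bordered_mul_bordered, ← hW]
      simp [schur]
    obtain ⟨V, hV⟩ := hU.exists_right_inv
    refine ⟨bordered 1 v 0 W * V, ?_⟩
    calc M = (U * V)ᵀ * M * (U * V) := by simp [hV]
      _ = Vᵀ * (Uᵀ * M * U) * V := by simp only [transpose_mul, Matrix.mul_assoc]
      _ = _ := by rw [hbord, factor, transpose_mul]; simp only [Matrix.mul_assoc]

end HermiteReduction

section ThreeSquares

open Matrix
open scoped NumberTheorySymbols

/-- `n` is a sum of three integer squares. -/
def IsSumOfThreeSquares (n : ℤ) : Prop := ∃ u v w : ℤ, n = u ^ 2 + v ^ 2 + w ^ 2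

theorem IsSumOfThreeSquares.sq_mul {n : ℤ} (h : IsSumOfThreeSquares n) (k : ℤ) :
    IsSumOfThreeSquares (k ^ 2 * n) := by
  obtain ⟨u, v, w, rfl⟩ := h
  exact ⟨k * u, k * v, k * w, by ring⟩

-- This matrix has determinant one and the integer `n` to be represented on its diagonal.
theorem posDef_of_sq_add_eq {n d A B : ℤ} (hd : 0 < d) (hdn : 0 < d * n - 1)
    (h : B ^ 2 + d = (d * n - 1) * A) : !![A, B, 1; B, d * n - 1, 0; 1, 0, n].PosDef := by
  refine .of_dotProduct_mulVec_pos ?_ fun x hx => ?_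
  · ext i j
    fin_cases i <;> fin_cases j <;> rfl
  set Q := star x ⬝ᵥ !![A, B, 1; B, d * n - 1, 0; 1, 0, n] *ᵥ x with hQ
  have squares : d * (d * n - 1) * Q = d * ((d * n - 1) * x 1 + B * x 0) ^ 2 +
      (d * x 0 + (d * n - 1) * x 2) ^ 2 + (d * n - 1) * x 2 ^ 2 := by
    simp only [hQ, star_trivial, dotProduct, mulVec, Fin.sum_univ_three, of_apply, cons_val]
    linear_combination (-(d * x 0 ^ 2)) * h
  refine pos_of_mul_pos_right (lt_of_not_ge fun hle => hx ?_) (mul_pos hd hdn).le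
  rw [squares] at hle
  have h2 : x 2 = 0 := by
    by_contra hne
    have : 0 < (d * n - 1) * x 2 ^ 2 := by positivity
    linarith [mul_nonneg hd.le (sq_nonneg ((d * n - 1) * x 1 + B * x 0)),
      sq_nonneg (d * x 0 + (d * n - 1) * x 2)]
  have h0 : x 0 = 0 := by
    by_contra hne
    have : 0 < (d * x 0) ^ 2 := by positivity
    simp only [h2] at hle
    linarith [mul_nonneg hd.le (sq_nonneg ((d * n - 1) * x 1 + B * x 0))]
  have h1 : x 1 = 0 := by
    by_contra hne
    have : 0 < d * ((d * n - 1) * x 1) ^ 2 := by positivity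
    simp only [h2, h0] at hle
    linarith
  ext i
  fin_cases i <;> assumption

theorem isSumOfThreeSquares_of_sq_add_eq {n d A B : ℤ} (hd : 0 < d) (hdn : 0 < d * n - 1)
    (h : B ^ 2 + d = (d * n - 1) * A) : IsSumOfThreeSquares n := by
  have hdet : !![A, B, 1; B, d * n - 1, 0; 1, 0, n].det = 1 := by
    rw [det_fin_three]
    simp only [of_apply, cons_val]
    linear_combination (-n) * h
  obtain ⟨U, hU⟩ :=
    exists_eq_transpose_mul_self (by norm_num) (posDef_of_sq_add_eq hd hdn h) hdet
  have entry := congrFun (congrFun hU 2) 2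
  simp only [of_apply, cons_val, mul_apply, transpose_apply, Fin.sum_univ_three] at entry
  exact ⟨U 0 2, U 1 2, U 2 2, by rw [entry]; ring⟩

theorem exists_dvd_sq_add_of_jacobiSym_eq_one {p : ℕ} {d : ℤ} (hp : p.Prime)
    (h : J(-d | p) = 1) : ∃ B : ℤ, (p : ℤ) ∣ B ^ 2 + d := by
  have : Fact p.Prime := ⟨hp⟩
  obtain ⟨r, hr⟩ := ZMod.isSquare_of_jacobiSym_eq_one h
  refine ⟨r.val, ?_⟩
  rw [← ZMod.intCast_zmod_eq_zero_iff_dvd]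
  push_cast at hr ⊢
  rw [ZMod.natCast_zmod_val]
  linear_combination -hr

theorem jacobiSym_neg_eq_one_of_add_one_eq {p d n : ℕ} (hp : p % 4 = 1) (hd : d % 4 = 1)
    (h : p + 1 = d * n) : J(-(d : ℤ) | p) = 1 := by
  have hp_odd : Odd p := Nat.odd_iff.mpr (by omega)
  have hd_odd : Odd d := Nat.odd_iff.mpr (by omega)
  have hmod : (p : ℤ) % d = -1 % d :=
    (Int.modEq_iff_dvd.mpr ⟨-n, by push_cast [← Nat.cast_inj (R := ℤ)] at h; linarith⟩).eq
  calc J(-(d : ℤ) | p) = J(p | d) := by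
        rw [jacobiSym.neg _ hp_odd, ZMod.χ₄_nat_one_mod_four hp, one_mul,
          jacobiSym.quadratic_reciprocity_one_mod_four hd hp_odd]
    _ = J(-1 | d) := jacobiSym.mod_left' hmod
    _ = 1 := by rw [jacobiSym.at_neg_one hd_odd, ZMod.χ₄_nat_one_mod_four hd]

theorem jacobiSym_neg_eq_one_of_two_mul_add_one_eq {p d n : ℕ}
    (hp : p % 4 = 1 ∨ p % 4 = 3 ∧ d % 4 = 3) (hd : d % 8 = 1 ∨ d % 8 = 3)
    (h : 2 * p + 1 = d * n) : J(-(d : ℤ) | p) = 1 := by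
  have hp_odd : Odd p := Nat.odd_iff.mpr (by omega)
  have hd_odd : Odd d := Nat.odd_iff.mpr (by omega)
  have reciprocity : J(-(d : ℤ) | p) = J(p | d) := by
    rw [jacobiSym.neg _ hp_odd]
    rcases hp with hp | ⟨hp, hd3⟩
    · rw [ZMod.χ₄_nat_one_mod_four hp, one_mul,
        jacobiSym.quadratic_reciprocity_one_mod_four' hd_odd hp]
    · rw [ZMod.χ₄_nat_three_mod_four hp, jacobiSym.quadratic_reciprocity_three_mod_four hd3 hp,
        neg_one_mul, neg_neg]
  have at_neg_two : J(-2 | d) = 1 := by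
    rw [jacobiSym.at_neg_two hd_odd, ZMod.χ₈'_nat_eq_if_mod_eight]
    grind
  have hmod : -2 * (p : ℤ) % d = 1 % d :=
    (Int.modEq_iff_dvd.mpr ⟨n, by push_cast [← Nat.cast_inj (R := ℤ)] at h; linarith⟩).eq
  calc J(-(d : ℤ) | p) = J(-2 | d) * J(p | d) := by rw [reciprocity, at_neg_two, one_mul]
    _ = J(-2 * p | d) := (jacobiSym.mul_left ..).symm
    _ = 1 := by rw [jacobiSym.mod_left' hmod, jacobiSym.one_left]

theorem isSumOfThreeSquares_of_prime_add_one_eq {p d n : ℕ} (hprime : p.Prime) (hp : p % 4 = 1)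
    (hd : d % 4 = 1) (h : p + 1 = d * n) : IsSumOfThreeSquares n := by
  obtain ⟨B, A, hA⟩ := exists_dvd_sq_add_of_jacobiSym_eq_one hprime
    (jacobiSym_neg_eq_one_of_add_one_eq hp hd h)
  have hdn : (d : ℤ) * n - 1 = p := by
    rw [← Nat.cast_mul, ← h]
    simp
  refine isSumOfThreeSquares_of_sq_add_eq (d := d) ?_ ?_ (hdn ▸ hA)
  · omega
  · rw [hdn]
    exact_mod_cast hprime.pos

theorem isSumOfThreeSquares_of_two_mul_prime_add_one_eq {p d n : ℕ} (hprime : p.Prime)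
    (hp : p % 4 = 1 ∨ p % 4 = 3 ∧ d % 4 = 3) (hd : d % 8 = 1 ∨ d % 8 = 3)
    (h : 2 * p + 1 = d * n) : IsSumOfThreeSquares n := by
  obtain ⟨B₀, hB₀⟩ := exists_dvd_sq_add_of_jacobiSym_eq_one hprime
    (jacobiSym_neg_eq_one_of_two_mul_add_one_eq hp hd h)
  obtain ⟨B, hB, hB_odd⟩ : ∃ B : ℤ, (p : ℤ) ∣ B ^ 2 + d ∧ Odd B := by
    rcases Int.even_or_odd B₀ with heven | hodd
    · have hp_odd : Odd (p : ℤ) := Int.odd_iff.mpr (by omega)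
      refine ⟨B₀ + p, ?_, heven.add_odd hp_odd⟩
      rw [show (B₀ + p) ^ 2 + (d : ℤ) = B₀ ^ 2 + d + p * (2 * B₀ + p) by ring]
      exact dvd_add hB₀ (dvd_mul_right _ _)
    · exact ⟨B₀, hB₀, hodd⟩
  have two_dvd : (2 : ℤ) ∣ B ^ 2 + d :=
    (hB_odd.pow.add_odd (Int.odd_iff.mpr (by omega))).two_dvd
  have hcop : IsCoprime (2 : ℤ) p :=
    Nat.isCoprime_iff_coprime.mpr (Nat.coprime_two_left.mpr (Nat.odd_iff.mpr (by omega)))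
  obtain ⟨A, hA⟩ := hcop.mul_dvd two_dvd hB
  have hdn : (d : ℤ) * n - 1 = 2 * p := by
    rw [← Nat.cast_mul, ← h]
    simp
  refine isSumOfThreeSquares_of_sq_add_eq (d := d) ?_ ?_ (hdn ▸ hA)
  · omega
  · have := hprime.pos
    omega

theorem exists_prime_add_mul {a q : ℕ} (hq : q ≠ 0) (h : a.Coprime q) :
    ∃ j, (a + q * j).Prime := by
  obtain ⟨p, hlt, hp, hmod⟩ := Nat.forall_exists_prime_gt_and_modEq a hq h
  obtain ⟨j, hj⟩ := (Nat.modEq_iff_dvd' hlt.le).mp hmod.symm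
  exact ⟨j, by rwa [← hj, Nat.add_sub_cancel' hlt.le]⟩

theorem isSumOfThreeSquares_of_mod_four_eq_two {n : ℕ} (h : n % 4 = 2) :
    IsSumOfThreeSquares n := by
  obtain ⟨a, rfl⟩ : ∃ a, n = a + 1 := ⟨n - 1, by omega⟩
  have hcop : a.Coprime (4 * (a + 1)) :=
    ((Nat.coprime_two_right.mpr (Nat.odd_iff.mpr (by omega))).pow_right 2).mul_right
      (Nat.coprime_self_add_right.mpr (Nat.coprime_one_right a))
  obtain ⟨j, hj⟩ := exists_prime_add_mul (by omega) hcop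
  exact isSumOfThreeSquares_of_prime_add_one_eq hj (d := 4 * j + 1)
    (by rw [mul_assoc, Nat.add_mul_mod_self_left]; omega) (by omega) (by ring)

theorem isSumOfThreeSquares_of_two_mul_add_one_eq {a c n : ℕ}
    (ha : a % 4 = 1 ∨ a % 4 = 3 ∧ c % 4 = 3) (hc : c % 8 = 1 ∨ c % 8 = 3)
    (h : 2 * a + 1 = c * n) : IsSumOfThreeSquares n := by
  have hcop : a.Coprime (4 * n) := by
    refine ((Nat.coprime_two_right.mpr (Nat.odd_iff.mpr (by omega))).pow_right 2).mul_right ?_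
    refine Nat.isCoprime_iff_coprime.mp ⟨-2, c, ?_⟩
    rw [← Nat.cast_mul, ← h]
    push_cast
    ring
  have hn : n ≠ 0 := by
    rintro rfl
    omega
  obtain ⟨j, hj⟩ := exists_prime_add_mul (by omega) hcop
  have hmod : (a + 4 * n * j) % 4 = a % 4 := by rw [mul_assoc, Nat.add_mul_mod_self_left]
  exact isSumOfThreeSquares_of_two_mul_prime_add_one_eq hj (d := 8 * j + c)
    (by omega) (by omega) (by linear_combination h)

theorem isSumOfThreeSquares_of_mod_ne {n : ℤ} (hn : 0 ≤ n) (h₄ : n % 4 ≠ 0) (h₈ : n % 8 ≠ 7) :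
    IsSumOfThreeSquares n := by
  lift n to ℕ using hn
  obtain h | h | h : n % 4 = 2 ∨ n % 8 = 3 ∨ n % 4 = 1 := by omega
  · exact isSumOfThreeSquares_of_mod_four_eq_two h
  · exact isSumOfThreeSquares_of_two_mul_add_one_eq (a := n / 2) (c := 1)
      (by omega) (by omega) (by omega)
  · exact isSumOfThreeSquares_of_two_mul_add_one_eq (a := 3 * n / 2) (c := 3)
      (by omega) (by omega) (by omega)

end ThreeSquares

section SquaresModulo

theorem sq_emod_three (x : ℤ) : x ^ 2 % 3 = if 3 ∣ x then 0 else 1 := by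
  rw [sq, Int.mul_emod]
  obtain h | h | h : x % 3 = 0 ∨ x % 3 = 1 ∨ x % 3 = 2 := by omega
  all_goals
    rw [h]
    split <;> omega

theorem sq_emod_four (x : ℤ) : x ^ 2 % 4 = if Odd x then 1 else 0 := by
  split
  case isTrue h => exact Int.sq_mod_four_eq_one_of_odd h
  case isFalse h =>
    obtain ⟨k, rfl⟩ := Int.not_odd_iff_even.mp h
    rw [show (k + k) ^ 2 = 4 * k ^ 2 by ring, Int.mul_emod_right]

theorem odd_of_sq_add_sq_add_sq_emod_four_eq_three {u v w : ℤ}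
    (h : (u ^ 2 + v ^ 2 + w ^ 2) % 4 = 3) : Odd u ∧ Odd v ∧ Odd w := by
  have hu := sq_emod_four u
  have hv := sq_emod_four v
  have hw := sq_emod_four w
  grind

theorem exists_neg_or_self_three_dvd_sub {x c : ℤ} (hx : ¬ 3 ∣ x) (hc : ¬ 3 ∣ c) :
    ∃ y, (y = x ∨ y = -x) ∧ 3 ∣ y - c := by
  obtain h | h : x % 3 = c % 3 ∨ -x % 3 = c % 3 := by omega
  · exact ⟨x, .inl rfl, by omega⟩
  · exact ⟨-x, .inr rfl, by omega⟩

theorem exists_neg_or_self_four_dvd_sub {x c : ℤ} (hx : Odd x) (hc : Odd c) :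
    ∃ y, (y = x ∨ y = -x) ∧ 4 ∣ y - c := by
  rw [Int.odd_iff] at hx hc
  by_cases h : 4 ∣ x - c
  · exact ⟨x, .inl rfl, h⟩
  · exact ⟨-x, .inr rfl, by omega⟩

namespace IsSumOfThreeSquares

theorem exists_of_emod_three_eq_one {n : ℤ} (h : IsSumOfThreeSquares n) (hn : n % 3 = 1) :
    ∃ u v w : ℤ, n = u ^ 2 + v ^ 2 + w ^ 2 ∧ 3 ∣ u ∧ 3 ∣ v ∧ ¬ 3 ∣ w := by
  obtain ⟨u, v, w, rfl⟩ := h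
  have hu := sq_emod_three u
  have hv := sq_emod_three v
  have hw := sq_emod_three w
  by_cases h3u : 3 ∣ u <;> by_cases h3v : 3 ∣ v
  · exact ⟨u, v, w, rfl, h3u, h3v, by grind⟩
  · exact ⟨u, w, v, by ring, h3u, by grind, h3v⟩
  · exact ⟨w, v, u, by ring, by grind, h3v, h3u⟩
  · grind

theorem exists_of_emod_three_eq_two {n : ℤ} (h : IsSumOfThreeSquares n) (hn : n % 3 = 2) :
    ∃ u v w : ℤ, n = u ^ 2 + v ^ 2 + w ^ 2 ∧ ¬ 3 ∣ u ∧ ¬ 3 ∣ v ∧ 3 ∣ w := by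
  obtain ⟨u, v, w, rfl⟩ := h
  have hu := sq_emod_three u
  have hv := sq_emod_three v
  have hw := sq_emod_three w
  by_cases h3u : 3 ∣ u
  · exact ⟨v, w, u, by ring, by grind, by grind, h3u⟩
  by_cases h3v : 3 ∣ v
  · exact ⟨u, w, v, by ring, h3u, by grind, h3v⟩
  · exact ⟨u, v, w, rfl, h3u, h3v, by grind⟩

-- The linear forms in the proof are, up to signs, three times a rational rotation.
theorem exists_not_three_dvd_nine_mul {u v w : ℤ} (hu : ¬ 3 ∣ u) :
    ∃ x y z : ℤ, 9 * (u ^ 2 + v ^ 2 + w ^ 2) = x ^ 2 + y ^ 2 + z ^ 2 ∧ ¬ 3 ∣ x := by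
  obtain ⟨v', w', hv, hw, h⟩ : ∃ v' w', (v' = v ∨ v' = -v) ∧ (w' = w ∨ w' = -w) ∧
      ¬ 3 ∣ u + 2 * v' + 2 * w' := by
    by_cases h₁ : 3 ∣ u + 2 * v + 2 * w
    · by_cases h₂ : 3 ∣ u + 2 * v + 2 * -w
      · exact ⟨-v, w, .inr rfl, .inl rfl, by omega⟩
      · exact ⟨v, -w, .inl rfl, .inr rfl, h₂⟩
    · exact ⟨v, w, .inl rfl, .inl rfl, h₁⟩
  refine ⟨u + 2 * v' + 2 * w', 2 * u + v' - 2 * w', 2 * u - 2 * v' + w', ?_, h⟩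
  rw [← sq_eq_sq_iff_eq_or_eq_neg.mpr hv, ← sq_eq_sq_iff_eq_or_eq_neg.mpr hw]
  ring

theorem exists_not_three_dvd {n : ℤ} (h : IsSumOfThreeSquares n) (hn : n ≠ 0) :
    ∃ u v w : ℤ, n = u ^ 2 + v ^ 2 + w ^ 2 ∧ ¬ 3 ∣ u := by
  obtain ⟨k, hk⟩ : ∃ k : ℕ, n.natAbs = k := ⟨_, rfl⟩
  induction k using Nat.strong_induction_on generalizing n with
  | h k ih =>
    obtain ⟨u, v, w, rfl⟩ := h
    by_cases hu : 3 ∣ u; swap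
    · exact ⟨u, v, w, rfl, hu⟩
    by_cases hv : 3 ∣ v; swap
    · exact ⟨v, u, w, by ring, hv⟩
    by_cases hw : 3 ∣ w; swap
    · exact ⟨w, u, v, by ring, hw⟩
    obtain ⟨⟨u, rfl⟩, ⟨v, rfl⟩, ⟨w, rfl⟩⟩ := And.intro hu (And.intro hv hw)
    have hnine : (3 * u) ^ 2 + (3 * v) ^ 2 + (3 * w) ^ 2 = 9 * (u ^ 2 + v ^ 2 + w ^ 2) := by ring
    rw [hnine] at hk hn ⊢
    obtain ⟨u', v', w', h', hu'⟩ := ih _ (by omega) ⟨u, v, w, rfl⟩ (by omega) rfl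
    rw [h']
    exact exists_not_three_dvd_nine_mul hu'

theorem exists_three_dvd_add_sub {n : ℤ} (h : IsSumOfThreeSquares n) (hn : n ≠ 0) (c : ℤ) :
    ∃ u v w : ℤ, n = u ^ 2 + v ^ 2 + w ^ 2 ∧ 3 ∣ u + v - c := by
  obtain ⟨u, v, w, rfl, hu⟩ := h.exists_not_three_dvd hn
  have of_signs {x y z x' y' : ℤ} (hx : x' = x ∨ x' = -x) (hy : y' = y ∨ y' = -y)
      (hsum : u ^ 2 + v ^ 2 + w ^ 2 = x ^ 2 + y ^ 2 + z ^ 2) (hdvd : 3 ∣ x' + y' - c) :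
      ∃ x y z : ℤ, u ^ 2 + v ^ 2 + w ^ 2 = x ^ 2 + y ^ 2 + z ^ 2 ∧ 3 ∣ x + y - c :=
    ⟨x', y', z, by rw [hsum, sq_eq_sq_iff_eq_or_eq_neg.mpr hx, sq_eq_sq_iff_eq_or_eq_neg.mpr hy],
      hdvd⟩
  by_cases hc : 3 ∣ c
  · by_cases hv : 3 ∣ v; swap
    · obtain ⟨y, hy, hdvd⟩ := exists_neg_or_self_three_dvd_sub hv (c := -u) (by omega)
      exact of_signs (.inl rfl) hy rfl (by omega)
    by_cases hw : 3 ∣ w; swap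
    · obtain ⟨y, hy, hdvd⟩ := exists_neg_or_self_three_dvd_sub hw (c := -u) (by omega)
      exact of_signs (z := v) (.inl rfl) hy (by ring) (by omega)
    exact ⟨v, w, u, by ring, by omega⟩
  · by_cases hv : 3 ∣ v
    · obtain ⟨x, hx, hdvd⟩ := exists_neg_or_self_three_dvd_sub hu hc
      exact of_signs hx (.inl rfl) rfl (by omega)
    · obtain ⟨x, hx, hdvdx⟩ := exists_neg_or_self_three_dvd_sub hu (c := -c) (by omega)
      obtain ⟨y, hy, hdvdy⟩ := exists_neg_or_self_three_dvd_sub hv (c := -c) (by omega)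
      exact of_signs hx hy rfl (by omega)

end IsSumOfThreeSquares

end SquaresModulo

section MomentPairs

/-- There are integers `x k` with `∑ k, w k * x k ^ 2 = a` and `∑ k, w k * x k = b`, as in
Cauchy's lemma on the two moments of four integers. -/
def IsMomentPair {ι : Type*} [Fintype ι] (w : ι → ℤ) (a b : ℤ) : Prop :=
  ∃ x : ι → ℤ, ∑ k, w k * x k ^ 2 = a ∧ ∑ k, w k * x k = b

namespace IsMomentPair

theorem reflect {ι : Type*} [Fintype ι] {w : ι → ℤ} {a b : ℤ} (h : IsMomentPair w a b) :
    IsMomentPair w (a - 2 * b + ∑ k, w k) (∑ k, w k - b) := by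
  obtain ⟨x, rfl, rfl⟩ := h
  refine ⟨fun k => 1 - x k, ?_, ?_⟩
  · rw [Finset.mul_sum, ← Finset.sum_sub_distrib, ← Finset.sum_add_distrib]
    exact Finset.sum_congr rfl fun k _ => by ring
  · rw [← Finset.sum_sub_distrib]
    exact Finset.sum_congr rfl fun k _ => by ring

theorem of_castSucc {n : ℕ} {w : Fin (n + 1) → ℤ} {a b : ℤ} (t : ℤ)
    (h : IsMomentPair (fun k : Fin n => w k.castSucc) (a - w (.last n) * t ^ 2)
      (b - w (.last n) * t)) :
    IsMomentPair w a b := by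
  obtain ⟨x, hsq, hlin⟩ := h
  refine ⟨Fin.snoc (α := fun _ => ℤ) x t, ?_, ?_⟩ <;>
    simp only [Fin.sum_univ_castSucc, Fin.snoc_castSucc, Fin.snoc_last] <;> linarith

end IsMomentPair

theorem isMomentPair_of_eq {a b : ℤ} (x₁ x₂ x₃ x₄ x₅ : ℤ)
    (hsq : x₁ ^ 2 + x₂ ^ 2 + 2 * x₃ ^ 2 + 3 * x₄ ^ 2 + 5 * x₅ ^ 2 = a)
    (hlin : x₁ + x₂ + 2 * x₃ + 3 * x₄ + 5 * x₅ = b) :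
    IsMomentPair ![1, 1, 2, 3, 5] a b :=
  ⟨![x₁, x₂, x₃, x₄, x₅], by simpa [Fin.sum_univ_five] using hsq,
    by simpa [Fin.sum_univ_five] using hlin⟩

end MomentPairs

section OddMoments

-- Fixing the linear moment and `x₂ - x₅ = t` leaves a ternary quadratic form that is rationally
-- equivalent to a sum of three squares; the congruences make the substitution integral.
theorem isMomentPair_of_odd_of_congr {a b t u v w : ℤ}
    (h : 12 * a - b ^ 2 - 10 * t ^ 2 = u ^ 2 + v ^ 2 + w ^ 2)
    (hb : Odd b) (ht : Even t) (hu₄ : 4 ∣ u - b) (hu₃ : 3 ∣ u - (b + t))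
    (hv : Odd v) (hv₃ : 3 ∣ v) (hw₃ : 3 ∣ w - (t - b)) (hvw : 4 ∣ v - w) :
    IsMomentPair ![1, 1, 2, 3, 5] a b := by
  rw [Int.odd_iff] at hb hv
  rw [Int.even_iff] at ht
  obtain ⟨x₅, hx₅⟩ : 12 ∣ b - 2 * t - u := by omega
  obtain ⟨x₄, hx₄⟩ : 12 ∣ b + u - w - v := by omega
  obtain ⟨x₃, hx₃⟩ : 12 ∣ b + u + 2 * w := by omega
  obtain rfl : u = b - 2 * t - 12 * x₅ := by linarith
  obtain rfl : w = 6 * x₃ - b + t + 6 * x₅ := by linarith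
  obtain rfl : v = 3 * b - 6 * x₃ - 3 * t - 18 * x₅ - 12 * x₄ := by linarith
  refine isMomentPair_of_eq (b - t - 6 * x₅ - 3 * x₄ - 2 * x₃) (x₅ + t) x₃ x₄ x₅ ?_ (by ring)
  have : (12 : ℤ) * ((b - t - 6 * x₅ - 3 * x₄ - 2 * x₃) ^ 2 + (x₅ + t) ^ 2 + 2 * x₃ ^ 2 +
      3 * x₄ ^ 2 + 5 * x₅ ^ 2) = 12 * a := by
    linear_combination -h
  linarith

theorem twelve_mul_sub_sq_sub_forty_emod_eight {a b : ℤ} (ha : Odd a) (hb : Odd b) :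
    (12 * a - b ^ 2 - 40) % 8 = 3 := by
  have := Int.eight_dvd_sq_sub_one_of_odd hb
  rw [Int.odd_iff] at ha
  omega

theorem isSumOfThreeSquares_twelve_mul_sub {a b : ℤ} (ha : Odd a) (hb : Odd b)
    (h : b ^ 2 + 40 ≤ 12 * a) : IsSumOfThreeSquares (12 * a - b ^ 2 - 40) := by
  have := twelve_mul_sub_sq_sub_forty_emod_eight ha hb
  exact isSumOfThreeSquares_of_mod_ne (by linarith) (by omega) (by omega)

theorem odd_of_twelve_mul_sub_eq {a b u v w : ℤ} (ha : Odd a) (hb : Odd b)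
    (h : 12 * a - b ^ 2 - 40 = u ^ 2 + v ^ 2 + w ^ 2) : Odd u ∧ Odd v ∧ Odd w := by
  have := twelve_mul_sub_sq_sub_forty_emod_eight ha hb
  exact odd_of_sq_add_sq_add_sq_emod_four_eq_three (by omega)

theorem odd_of_eq_or_eq_neg {x y : ℤ} (hx : Odd x) (h : y = x ∨ y = -x) : Odd y := by
  obtain rfl | rfl := h
  exacts [hx, hx.neg]

theorem three_dvd_iff_of_eq_or_eq_neg {x y : ℤ} (h : y = x ∨ y = -x) : 3 ∣ y ↔ 3 ∣ x := by
  obtain rfl | rfl := h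
  exacts [.rfl, dvd_neg]

theorem exists_two_or_neg_two_three_dvd_sub {c : ℤ} (hc : ¬ 3 ∣ c) :
    ∃ t : ℤ, (t = 2 ∨ t = -2) ∧ 3 ∣ t - c :=
  exists_neg_or_self_three_dvd_sub (by norm_num) hc

theorem isMomentPair_of_odd_of_congr_up_to_sign {a b t u v w u' v' w' : ℤ} (hb : Odd b)
    (h : 12 * a - b ^ 2 - 40 = u ^ 2 + v ^ 2 + w ^ 2) (ht : t = 2 ∨ t = -2)
    (hu' : u' = u ∨ u' = -u) (hv' : v' = v ∨ v' = -v) (hw' : w' = w ∨ w' = -w)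
    (hu₄ : 4 ∣ u' - b) (hu₃ : 3 ∣ u' - (b + t)) (hv : Odd v) (hv₃ : 3 ∣ v)
    (hw₃ : 3 ∣ w' - (t - b)) (hvw : 4 ∣ v' - w') : IsMomentPair ![1, 1, 2, 3, 5] a b := by
  refine isMomentPair_of_odd_of_congr ?_ hb ?_ hu₄ hu₃ (odd_of_eq_or_eq_neg hv hv')
    ((three_dvd_iff_of_eq_or_eq_neg hv').mpr hv₃) hw₃ hvw
  · simp only [sq_eq_sq_iff_eq_or_eq_neg.mpr ht, sq_eq_sq_iff_eq_or_eq_neg.mpr hu',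
      sq_eq_sq_iff_eq_or_eq_neg.mpr hv', sq_eq_sq_iff_eq_or_eq_neg.mpr hw', ← h]
    ring
  · obtain rfl | rfl := ht <;> decide

theorem isMomentPair_of_odd_of_not_three_dvd {a b : ℤ} (ha : Odd a) (hb : Odd b) (hb₃ : ¬ 3 ∣ b)
    (hab : b ^ 2 + 40 ≤ 12 * a) : IsMomentPair ![1, 1, 2, 3, 5] a b := by
  have hmod := sq_emod_three b
  rw [if_neg hb₃] at hmod
  obtain ⟨u, v, w, h, hu₃, hv₃, hw₃⟩ :=
    (isSumOfThreeSquares_twelve_mul_sub ha hb hab).exists_of_emod_three_eq_one (by omega)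
  obtain ⟨hu, hv, hw⟩ := odd_of_twelve_mul_sub_eq ha hb h
  obtain ⟨t, ht, htb⟩ := exists_two_or_neg_two_three_dvd_sub (c := -b) (by omega)
  obtain ⟨u', hu', hub⟩ := exists_neg_or_self_four_dvd_sub hu hb
  obtain ⟨w', hw', hwb⟩ := exists_neg_or_self_three_dvd_sub hw₃ hb₃
  obtain ⟨v', hv', hvw⟩ := exists_neg_or_self_four_dvd_sub hv (odd_of_eq_or_eq_neg hw hw')
  have hu₃' := (three_dvd_iff_of_eq_or_eq_neg hu').mpr hu₃
  exact isMomentPair_of_odd_of_congr_up_to_sign hb h ht hu' hv' hw' hub (by omega) hv hv₃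
    (by omega) hvw

theorem isMomentPair_of_odd_of_three_dvd {a b : ℤ} (ha : Odd a) (hb : Odd b) (hb₃ : 3 ∣ b)
    (hab : b ^ 2 + 40 ≤ 12 * a) : IsMomentPair ![1, 1, 2, 3, 5] a b := by
  have hmod := sq_emod_three b
  rw [if_pos hb₃] at hmod
  obtain ⟨u, w, v, h, hu₃, hw₃, hv₃⟩ :=
    (isSumOfThreeSquares_twelve_mul_sub ha hb hab).exists_of_emod_three_eq_two (by omega)
  obtain ⟨hu, hw, hv⟩ := odd_of_twelve_mul_sub_eq ha hb h
  obtain ⟨u', hu', hub⟩ := exists_neg_or_self_four_dvd_sub hu hb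
  obtain ⟨t, ht, htu⟩ := exists_two_or_neg_two_three_dvd_sub
    ((three_dvd_iff_of_eq_or_eq_neg hu').not.mpr hu₃)
  obtain ⟨w', hw', hwt⟩ := exists_neg_or_self_three_dvd_sub hw₃ (c := t) (by omega)
  obtain ⟨v', hv', hvw⟩ := exists_neg_or_self_four_dvd_sub hv (odd_of_eq_or_eq_neg hw hw')
  rw [add_right_comm] at h
  exact isMomentPair_of_odd_of_congr_up_to_sign hb h ht hu' hv' hw' hub (by omega) hv hv₃
    (by omega) hvw

theorem isMomentPair_of_odd {a b : ℤ} (ha : Odd a) (hb : Odd b) (hba : |b| ≤ a) (hb_lb : -1 ≤ b)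
    (hb_ub : b ≤ 6) : IsMomentPair ![1, 1, 2, 3, 5] a b := by
  by_cases hab : b ^ 2 + 40 ≤ 12 * a
  · by_cases hb₃ : 3 ∣ b
    · exact isMomentPair_of_odd_of_three_dvd ha hb hb₃ hab
    · exact isMomentPair_of_odd_of_not_three_dvd ha hb hb₃ hab
  obtain ⟨hab₁, hab₂⟩ := abs_le.mp hba
  rw [Int.odd_iff] at ha hb
  obtain rfl | rfl | rfl | rfl : b = -1 ∨ b = 1 ∨ b = 3 ∨ b = 5 := by omega
  · obtain rfl | rfl : a = 1 ∨ a = 3 := by omega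
    · exact isMomentPair_of_eq (-1) 0 0 0 0 rfl rfl
    · exact isMomentPair_of_eq 1 0 (-1) 0 0 rfl rfl
  · obtain rfl | rfl : a = 1 ∨ a = 3 := by omega
    · exact isMomentPair_of_eq 1 0 0 0 0 rfl rfl
    · exact isMomentPair_of_eq (-1) 0 1 0 0 rfl rfl
  · obtain rfl : a = 3 := by omega
    exact isMomentPair_of_eq 0 0 0 1 0 rfl rfl
  · obtain rfl : a = 5 := by omega
    exact isMomentPair_of_eq 0 0 0 0 1 rfl rfl

end OddMoments

section EvenMoments

theorem pow_dvd_sub_or_pow_dvd_add {R : Type*} [CommRing R] [IsDomain R] {p x y : R}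
    (hp : Prime p) {n : ℕ} (hx : ¬ p ∣ 2 * x) (h : p ^ n ∣ x ^ 2 - y ^ 2) :
    p ^ n ∣ x - y ∨ p ^ n ∣ x + y := by
  rw [sq_sub_sq] at h
  by_cases hadd : p ∣ x + y
  · have hsub : ¬ p ∣ x - y := fun hsub => hx <| by
      rw [show 2 * x = x + y + (x - y) by ring]
      exact dvd_add hadd hsub
    exact .inr (hp.pow_dvd_of_dvd_mul_right n hsub h)
  · exact .inl (hp.pow_dvd_of_dvd_mul_left n hadd h)

-- As in the odd case, but on the section `x₄ + x₅ = 2 * τ`.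
theorem isMomentPair_two_mul_of_congr {α β τ u v w : ℤ}
    (h : 9 * α - 4 * β ^ 2 + 30 * β * τ - 90 * τ ^ 2 = u ^ 2 + v ^ 2 + w ^ 2)
    (hw : 3 ∣ w) (huv : 3 ∣ u - v) (hadd : 9 ∣ u + v - (β - 15 * τ)) :
    IsMomentPair ![1, 1, 2, 3, 5] (2 * α) (2 * β) := by
  obtain ⟨p, rfl⟩ := hw
  obtain ⟨s, hs⟩ := hadd
  obtain ⟨g, hg⟩ := huv
  obtain ⟨k, hk⟩ : 2 ∣ g - β + 5 * τ + s := by omega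
  obtain rfl : g = 2 * k + β - 5 * τ - s := by linarith
  refine isMomentPair_of_eq (β - 5 * τ + k + p) (β - 5 * τ + k - p) (s - k) s (2 * τ - s) ?_
    (by ring)
  have hu : 2 * u = 9 * s + (β - 15 * τ) + 3 * (2 * k + β - 5 * τ - s) := by linarith
  have hv : 2 * v = 9 * s + (β - 15 * τ) - 3 * (2 * k + β - 5 * τ - s) := by linarith
  have h₄ : 4 * (9 * α - 4 * β ^ 2 + 30 * β * τ - 90 * τ ^ 2) =
      (2 * u) ^ 2 + (2 * v) ^ 2 + 4 * (3 * p) ^ 2 := by rw [h]; ring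
  rw [hu, hv] at h₄
  have : (18 : ℤ) * ((β - 5 * τ + k + p) ^ 2 + (β - 5 * τ + k - p) ^ 2 + 2 * (s - k) ^ 2 +
      3 * s ^ 2 + 5 * (2 * τ - s) ^ 2) = 18 * (2 * α) := by
    linear_combination -h₄
  linarith

theorem isMomentPair_two_mul_of_not_three_dvd {α β n : ℤ} (hβ : ¬ 3 ∣ β) (τ : ℤ)
    (hn : IsSumOfThreeSquares n) (h : n = 9 * α - 4 * β ^ 2 + 30 * β * τ - 90 * τ ^ 2) :
    IsMomentPair ![1, 1, 2, 3, 5] (2 * α) (2 * β) := by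
  have hmod := sq_emod_three β
  rw [if_neg hβ] at hmod
  have hn₃ : n % 3 = 2 := by
    rw [h, mul_assoc]
    omega
  obtain ⟨u, v, w, huvw, hu, hv, hw⟩ := hn.exists_of_emod_three_eq_two hn₃
  obtain ⟨v', hv', hvu⟩ := exists_neg_or_self_three_dvd_sub hv hu
  rw [← sq_eq_sq_iff_eq_or_eq_neg] at hv'
  rw [← hv'] at huvw
  have hnine : (3 : ℤ) ^ 2 ∣ (u + v') ^ 2 - (β - 15 * τ) ^ 2 := by
    obtain ⟨⟨g, hg⟩, ⟨p, rfl⟩⟩ := And.intro hvu hw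
    obtain rfl : v' = u + 3 * g := by linarith
    refine ⟨2 * α - β ^ 2 + 10 * β * τ - 45 * τ ^ 2 - g ^ 2 - 2 * p ^ 2, ?_⟩
    linear_combination 2 * h - 2 * huvw
  obtain hsub | hadd := pow_dvd_sub_or_pow_dvd_add Int.prime_three (by omega) hnine
  · exact isMomentPair_two_mul_of_congr (h.symm.trans huvw) hw (by omega) hsub
  · refine isMomentPair_two_mul_of_congr (τ := τ) (u := -u) (v := -v') (w := w) ?_ hw
      (by omega) (by omega)
    rw [← h, huvw]
    ring

theorem isMomentPair_two_mul_three_mul {α β n : ℤ} (τ : ℤ) (hn : IsSumOfThreeSquares n)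
    (hn₀ : n ≠ 0) (h : n = α - 4 * β ^ 2 + 10 * β * τ - 10 * τ ^ 2) :
    IsMomentPair ![1, 1, 2, 3, 5] (2 * α) (2 * (3 * β)) := by
  obtain ⟨u, v, w, huvw, hdvd⟩ := hn.exists_three_dvd_add_sub hn₀ (β - 5 * τ)
  refine isMomentPair_two_mul_of_congr (τ := τ) (u := 3 * u) (v := 3 * v) (w := 3 * w) ?_
    (by omega) (by omega) (by omega)
  linear_combination 9 * huvw - 9 * h

theorem isMomentPair_two_mul_zero {α : ℤ} (hα : 0 ≤ α) :
    IsMomentPair ![1, 1, 2, 3, 5] (2 * α) 0 := by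
  rw [show (0 : ℤ) = 2 * (3 * 0) by rfl]
  by_cases hmod : α % 8 = 0 ∨ α % 8 = 4 ∨ α % 8 = 7
  · obtain rfl | rfl | rfl | rfl | hα : α = 0 ∨ α = 4 ∨ α = 7 ∨ α = 8 ∨ 10 < α := by omega
    · exact isMomentPair_of_eq 0 0 0 0 0 rfl rfl
    · exact isMomentPair_of_eq 2 (-2) 0 0 0 rfl rfl
    · exact isMomentPair_of_eq 1 0 2 0 (-1) rfl rfl
    · exact isMomentPair_of_eq 3 0 1 0 (-1) rfl rfl
    · exact isMomentPair_two_mul_three_mul 1 (n := α - 10)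
        (isSumOfThreeSquares_of_mod_ne (by omega) (by omega) (by omega)) (by omega) (by ring)
  · exact isMomentPair_two_mul_three_mul 0 (n := α)
      (isSumOfThreeSquares_of_mod_ne (by omega) (by omega) (by omega)) (by omega) (by ring)

theorem isMomentPair_two_mul_two {α : ℤ} (hα : 1 ≤ α) :
    IsMomentPair ![1, 1, 2, 3, 5] (2 * α) 2 := by
  rw [show (2 : ℤ) = 2 * 1 by rfl]
  have sufficient {n : ℤ} (τ : ℤ) (hn : IsSumOfThreeSquares n)
      (h : n = 9 * α - 4 * 1 ^ 2 + 30 * 1 * τ - 90 * τ ^ 2) :=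
    isMomentPair_two_mul_of_not_three_dvd (by norm_num) τ hn h
  by_cases h₄ : 4 ∣ α
  · obtain ⟨γ, rfl⟩ := h₄
    by_cases hγ : γ % 4 = 1
    · obtain rfl | hγ₂ : γ = 1 ∨ 2 ≤ γ := by omega
      · exact isMomentPair_of_eq 0 0 0 (-1) 1 rfl rfl
      · have := isSumOfThreeSquares_of_mod_ne (n := 9 * γ - 16) (by omega) (by omega) (by omega)
        exact sufficient 1 (this.sq_mul 2) (by ring)
    by_cases hγ₈ : γ % 8 = 0
    · have := isSumOfThreeSquares_of_mod_ne (n := 9 * γ - 31) (by omega) (by omega) (by omega)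
      exact sufficient (-1) (this.sq_mul 2) (by ring)
    · have := isSumOfThreeSquares_of_mod_ne (n := 9 * γ - 1) (by omega) (by omega) (by omega)
      exact sufficient 0 (this.sq_mul 2) (by ring)
  by_cases h₈ : α % 8 = 3
  · obtain rfl | hα : α = 3 ∨ 8 ≤ α := by omega
    · exact isMomentPair_of_eq 1 0 (-1) 1 0 rfl rfl
    · exact sufficient 1 (n := 9 * α - 64)
        (isSumOfThreeSquares_of_mod_ne (by omega) (by omega) (by omega)) (by ring)
  · exact sufficient 0 (n := 9 * α - 4)
      (isSumOfThreeSquares_of_mod_ne (by omega) (by omega) (by omega)) (by ring)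

theorem isMomentPair_two_mul_four {α : ℤ} (hα : 2 ≤ α) :
    IsMomentPair ![1, 1, 2, 3, 5] (2 * α) 4 := by
  rw [show (4 : ℤ) = 2 * 2 by rfl]
  by_cases hmod : α % 8 = 0 ∨ α % 8 = 4 ∨ α % 8 = 7
  · obtain rfl | hα : α = 4 ∨ 6 ≤ α := by omega
    · exact isMomentPair_of_eq 0 0 2 0 0 rfl rfl
    · exact isMomentPair_two_mul_of_not_three_dvd (by norm_num) 1 (n := 9 * α - 46)
        (isSumOfThreeSquares_of_mod_ne (by omega) (by omega) (by omega)) (by ring)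
  · exact isMomentPair_two_mul_of_not_three_dvd (by norm_num) 0 (n := 9 * α - 16)
      (isSumOfThreeSquares_of_mod_ne (by omega) (by omega) (by omega)) (by ring)

theorem isMomentPair_two_mul_four_mul_six {γ : ℤ} (hγ : 1 ≤ γ) :
    IsMomentPair ![1, 1, 2, 3, 5] (2 * (4 * γ)) 6 := by
  rw [show (6 : ℤ) = 2 * (3 * 1) by rfl]
  have sufficient {n : ℤ} (τ : ℤ) (hn : 0 < n) (hn₄ : n % 4 ≠ 0) (hn₈ : n % 8 ≠ 7)
      (h : 4 * n = 4 * γ - 4 * 1 ^ 2 + 10 * 1 * τ - 10 * τ ^ 2) :=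
    isMomentPair_two_mul_three_mul τ
      ((isSumOfThreeSquares_of_mod_ne hn.le hn₄ hn₈).sq_mul 2) (by omega) h
  by_cases hγ₈ : γ % 8 = 0 ∨ γ % 8 = 1
  · obtain rfl | hγ : γ = 1 ∨ 6 < γ := by omega
    · exact isMomentPair_of_eq (-1) 0 1 0 1 rfl rfl
    · exact sufficient 2 (n := γ - 6) (by omega) (by omega) (by omega) (by ring)
  by_cases hγ₅ : γ % 8 = 5
  · obtain rfl | rfl | hγ : γ = 5 ∨ γ = 13 ∨ 16 < γ := by omega
    · exact isMomentPair_of_eq 0 0 4 1 (-1) rfl rfl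
    · exact isMomentPair_of_eq 10 (-1) 0 (-1) 0 rfl rfl
    · exact sufficient 3 (n := γ - 16) (by omega) (by omega) (by omega) (by ring)
  · exact sufficient 0 (n := γ - 1) (by omega) (by omega) (by omega) (by ring)

theorem isMomentPair_two_mul_six {α : ℤ} (hα : 3 ≤ α) :
    IsMomentPair ![1, 1, 2, 3, 5] (2 * α) 6 := by
  by_cases h₄ : 4 ∣ α
  · obtain ⟨γ, rfl⟩ := h₄
    exact isMomentPair_two_mul_four_mul_six (by omega)
  rw [show (6 : ℤ) = 2 * (3 * 1) by rfl]
  by_cases h₈ : α % 8 = 3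
  · obtain rfl | rfl | rfl | hα : α = 3 ∨ α = 11 ∨ α = 19 ∨ 24 < α := by omega
    · exact isMomentPair_of_eq 1 0 0 0 1 rfl rfl
    · exact isMomentPair_of_eq 0 (-3) 2 0 1 rfl rfl
    · exact isMomentPair_of_eq 5 0 (-2) 0 1 rfl rfl
    · exact isMomentPair_two_mul_three_mul 2 (n := α - 24)
        (isSumOfThreeSquares_of_mod_ne (by omega) (by omega) (by omega)) (by omega) (by ring)
  · exact isMomentPair_two_mul_three_mul 0 (n := α - 4)
      (isSumOfThreeSquares_of_mod_ne (by omega) (by omega) (by omega)) (by omega) (by ring)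

theorem isMomentPair_of_even {a b : ℤ} (ha : Even a) (hb : Even b) (hba : |b| ≤ a)
    (hb_lb : -1 ≤ b) (hb_ub : b ≤ 6) : IsMomentPair ![1, 1, 2, 3, 5] a b := by
  obtain ⟨α, rfl⟩ := ha.two_dvd
  have hle := (le_abs_self b).trans hba
  rw [Int.even_iff] at hb
  obtain rfl | rfl | rfl | rfl : b = 0 ∨ b = 2 ∨ b = 4 ∨ b = 6 := by omega
  · exact isMomentPair_two_mul_zero (by omega)
  · exact isMomentPair_two_mul_two (by omega)
  · exact isMomentPair_two_mul_four (by omega)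
  · exact isMomentPair_two_mul_six (by omega)

end EvenMoments

section MomentComplete

/-- Every pair `(a, b)` with `|b| ≤ a` and `a ≡ b [ZMOD 2]`, two conditions which are necessary
for nonnegative weights, and with `-1 ≤ b ≤ ∑ k, w k` is attained as a pair of moments. -/
def IsMomentComplete {ι : Type*} [Fintype ι] (w : ι → ℤ) : Prop :=
  ∀ a b : ℤ, |b| ≤ a → Even (a - b) → -1 ≤ b → b ≤ ∑ k, w k → IsMomentPair w a b

theorem isMomentComplete_one_one_two_three_five : IsMomentComplete ![1, 1, 2, 3, 5] := by
  have lower {a b : ℤ} (hba : |b| ≤ a) (hpar : Even (a - b)) (hlb : -1 ≤ b) (hub : b ≤ 6) :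
      IsMomentPair ![1, 1, 2, 3, 5] a b := by
    rcases Int.even_or_odd b with hb | hb
    · exact isMomentPair_of_even ((Int.even_sub.mp hpar).mpr hb) hb hba hlb hub
    · exact isMomentPair_of_odd (by grind) hb hba hlb hub
  intro a b hba hpar hlb hub
  have htotal : ∑ k, ![1, 1, 2, 3, 5] k = (12 : ℤ) := rfl
  rw [htotal] at hub
  by_cases hb : b ≤ 6
  · exact lower hba hpar hlb hb
  · have hreflect := (lower (a := a - 2 * b + 12) (b := 12 - b) (by grind) (by grind)
      (by omega) (by omega)).reflect
    rw [htotal] at hreflect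
    convert hreflect using 1 <;> ring

theorem IsMomentComplete.of_castSucc {n : ℕ} {w : Fin (n + 1) → ℤ}
    (h : IsMomentComplete fun k : Fin n => w k.castSucc)
    (hlast : w (.last n) ≤ 1 + ∑ k : Fin n, w k.castSucc) : IsMomentComplete w := by
  intro a b hba hpar hlb hub
  rw [Fin.sum_univ_castSucc] at hub
  by_cases hb : b ≤ ∑ k : Fin n, w k.castSucc
  · refine .of_castSucc 0 (h _ _ ?_ ?_ ?_ ?_) <;> simpa
  · refine .of_castSucc 1 (h _ _ ?_ ?_ ?_ ?_) <;> simp only [one_pow, mul_one]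
    · grind
    · rwa [sub_sub_sub_cancel_right]
    · omega
    · omega

end MomentComplete

section Polygonal

theorem two_mul_polygonal (m x : ℤ) : 2 * polygonal m x = (m - 2) * (x ^ 2 - x) + 2 * x := by
  have hnum : (m - 2) * x ^ 2 - (m - 4) * x = (m - 2) * (x * (x - 1)) + 2 * x := by ring
  have hdvd : 2 ∣ (m - 2) * x ^ 2 - (m - 4) * x := by
    rw [hnum]
    exact dvd_add ((Int.even_mul_pred_self x).two_dvd.mul_left _) (dvd_mul_right 2 x)
  rw [polygonal, Int.mul_ediv_cancel' hdvd]
  ring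

theorem two_mul_sum_mul_polygonal {ι : Type*} [Fintype ι] (m : ℤ) (w x : ι → ℤ) :
    2 * ∑ k, w k * polygonal m (x k) =
      (m - 2) * (∑ k, w k * x k ^ 2 - ∑ k, w k * x k) + 2 * ∑ k, w k * x k := by
  rw [← Finset.sum_sub_distrib, Finset.mul_sum, Finset.mul_sum, Finset.mul_sum,
    ← Finset.sum_add_distrib]
  exact Finset.sum_congr rfl fun k _ => by linear_combination w k * two_mul_polygonal m (x k)

theorem IsMomentComplete.exists_sum_mul_polygonal_eq {ι : Type*} [Fintype ι] {w : ι → ℤ}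
    (hw : IsMomentComplete w) {m : ℤ} (hm : 3 ≤ m) (hsum : m - 4 ≤ ∑ k, w k) {N : ℤ}
    (hN : 0 ≤ N) : ∃ x : ι → ℤ, ∑ k, w k * polygonal m (x k) = N := by
  obtain ⟨q, b, rfl, hq, hlb, hub, hqb⟩ : ∃ q b : ℤ,
      N = (m - 2) * q + b ∧ 0 ≤ q ∧ -1 ≤ b ∧ b ≤ m - 4 ∧ (0 ≤ b ∨ 1 ≤ q) := by
    have hm₂ : 0 < m - 2 := by omega
    have hdiv := Int.mul_ediv_add_emod (N + 1) (m - 2)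
    have hlb := Int.emod_nonneg (N + 1) hm₂.ne'
    have hub := Int.emod_lt_of_pos (N + 1) hm₂
    have hq : 0 ≤ (N + 1) / (m - 2) := Int.ediv_nonneg (by omega) hm₂.le
    generalize (N + 1) / (m - 2) = q at *
    generalize (N + 1) % (m - 2) = r at *
    refine ⟨q, r - 1, by linarith, hq, by omega, by omega, ?_⟩
    obtain rfl | hq' : q = 0 ∨ 1 ≤ q := by omega
    · exact .inl (by linarith)
    · exact .inr hq'
  obtain ⟨x, hsq, hlin⟩ := hw (2 * q + b) b (by grind) (by simp) hlb (hub.trans hsum)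
  refine ⟨x, mul_left_cancel₀ (two_ne_zero (α := ℤ)) ?_⟩
  rw [two_mul_sum_mul_polygonal, hsq, hlin]
  ring

theorem isMomentComplete_of_le_one_add_sum {w : ℕ → ℤ}
    (hfib : ∀ k < 5, w k = Nat.fib (k + 1))
    (hgrowth : ∀ k ≥ 5, w k ≤ 1 + ∑ j ∈ Finset.range k, w j) {n : ℕ} (hn : 5 ≤ n) :
    IsMomentComplete fun k : Fin n => w k := by
  induction n, hn using Nat.le_induction with
  | base =>
    convert isMomentComplete_one_one_two_three_five using 1
    ext k
    rw [hfib k k.isLt]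
    fin_cases k <;> rfl
  | succ n hn ih =>
    refine .of_castSucc ih ?_
    simpa only [Fin.val_castSucc, Fin.val_last, Fin.sum_univ_eq_sum_range] using hgrowth n hn

theorem fib_succ_le_one_add_sum (k : ℕ) :
    (Nat.fib (k + 1) : ℤ) ≤ 1 + ∑ j ∈ Finset.range k, (Nat.fib (j + 1) : ℤ) := by
  rw [Nat.fib_succ_eq_succ_sum, add_comm 1]
  push_cast
  gcongr
  exact Nat.le_succ _

theorem fibonacci_polygonal_universal_general (w : ℕ → ℤ)
    (hfib : ∀ k < 5, w k = Nat.fib (k + 1))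
    (hgrowth : ∀ k ≥ 5, w k ≤ 1 + ∑ j ∈ Finset.range k, w j) (m : ℤ) (hm : 3 ≤ m) (n : ℕ)
    (hn : 5 ≤ n) (hsum : m - 4 ≤ ∑ k ∈ Finset.range n, w k) :
    ∀ N : ℤ, 0 ≤ N → ∃ x : Fin n → ℤ, ∑ k : Fin n, w k * polygonal m (x k) = N := fun _ hN =>
  (isMomentComplete_of_le_one_add_sum hfib hgrowth hn).exists_sum_mul_polygonal_eq hm
    (by rwa [Fin.sum_univ_eq_sum_range]) hN

end Polygonal

theorem fibonacci_polygonal_universal (m : ℤ) (hm : 3 ≤ m) (n : ℕ) (hn : 5 ≤ n)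
    (hsum : m - 4 ≤ ∑ k ∈ Finset.range n, (Nat.fib (k + 1) : ℤ)) :
    ∀ N : ℤ, 0 < N →
      ∃ x : Fin n → ℤ,
        ∑ k : Fin n, (Nat.fib ((k : ℕ) + 1) : ℤ) * polygonal m (x k) = N := fun N hN =>
  fibonacci_polygonal_universal_general (fun k => Nat.fib (k + 1)) (fun _ _ => rfl)
    (fun k _ => fib_succ_le_one_add_sum k) m hm n hn hsum N hN.le
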